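/- Let R = (R_n : n ∈ ℕ) be a computable sequence of subsets of ℕ that admits no computable R-cohesive set. Then there exists a non-computable X ∈ 2^ℕ (i.e., the set {n : X(n) = 1} is not computable) such that no set C ⊆ ℕ with C ≤_T X is R-cohesive. -/

import Mathlib

open MeasureTheory

/-- Finite binary strings. -/
abbrev BinStr := List Bool

/-- `σ` is a (finite) initial segment of `X ∈ 2^ℕ`. -/
def IsInitSeg (σ : BinStr) (X : ℕ → Bool) : Prop :=
  ∀ i, i < σ.length → σ.getD i false = X i

/-- `A ⊆* B` : all but finitely many elements of `A` are in `B`. -/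
def SubsetStar (A B : Set ℕ) : Prop := (A \ B).Finite

/-- `C` is cohesive for the sequence `R`. -/
def Cohesive (R : ℕ → Set ℕ) (C : Set ℕ) : Prop :=
  C.Infinite ∧ ∀ n, SubsetStar C (R n) ∨ SubsetStar C (R n)ᶜ

/-- A set of naturals is computable if its characteristic function is computable. -/
def ComputableSet (A : Set ℕ) : Prop :=
  ∃ f : ℕ → Bool, Computable f ∧ ∀ n, n ∈ A ↔ f n = true

/-- A sequence of sets is computable if `{(n,x) : x ∈ R n}` is computable. -/
def ComputableSeq (R : ℕ → Set ℕ) : Prop :=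
  ∃ f : ℕ → ℕ → Bool, Computable₂ f ∧ ∀ n x, x ∈ R n ↔ f n x = true

/-- A use-monotone Turing functional: a partial computable map from
(strings × ℕ) to ℕ whose domain is monotone along extension of strings. -/
structure TuringFunctional where
  Φ : BinStr × ℕ →. ℕ
  partrec : Partrec Φ
  mono : ∀ ⦃σ τ : BinStr⦄, σ <+: τ → ∀ x, (Φ (σ, x)).Dom → (Φ (τ, x)).Dom

/-- `dom Φ(σ)` for a finite string `σ`. -/
def TuringFunctional.domStr (F : TuringFunctional) (σ : BinStr) : Set ℕ :=
  {x | (F.Φ (σ, x)).Dom}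

/-- `dom Φ(X)` for `X ∈ 2^ℕ`: the union of `dom Φ(σ)` over initial segments `σ` of `X`. -/
def TuringFunctional.domF (F : TuringFunctional) (X : ℕ → Bool) : Set ℕ :=
  {x | ∃ σ, IsInitSeg σ X ∧ (F.Φ (σ, x)).Dom}

/-- `C ≤_T X` via a monotone partial computable functional with Boolean values. -/
def ReducibleToFun (C : Set ℕ) (X : ℕ → Bool) : Prop :=
  ∃ Ψ : BinStr × ℕ →. Bool,
    Partrec Ψ ∧
    (∀ ⦃σ τ : BinStr⦄, σ <+: τ → ∀ x b, b ∈ Ψ (σ, x) → b ∈ Ψ (τ, x)) ∧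
    (∀ x, ∃ σ, IsInitSeg σ X ∧ (Ψ (σ, x)).Dom) ∧
    (∀ σ x b, IsInitSeg σ X → b ∈ Ψ (σ, x) → (b = true ↔ x ∈ C))

/-- `S` is a `Σ⁰₃` set of binary strings. -/
def Sigma3 (S : Set BinStr) : Prop :=
  ∃ P : BinStr → ℕ → ℕ → ℕ → Bool,
    (Computable fun q : BinStr × ℕ × ℕ × ℕ => P q.1 q.2.1 q.2.2.1 q.2.2.2) ∧
    ∀ σ, σ ∈ S ↔ ∃ a, ∀ b, ∃ c, P σ a b c = true

/-- `G ∈ 2^ℕ` is `3`-generic: it meets or strongly avoids every `Σ⁰₃` set of strings. -/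
def ThreeGeneric (G : ℕ → Bool) : Prop :=
  ∀ S : Set BinStr, Sigma3 S →
    (∃ σ, IsInitSeg σ G ∧ σ ∈ S) ∨ (∃ σ, IsInitSeg σ G ∧ ∀ τ, σ <+: τ → τ ∉ S)

/-- Binary trees: sets of strings closed under initial segments. -/
def IsTree (T : Set BinStr) : Prop := ∀ σ ∈ T, ∀ τ, τ <+: σ → τ ∈ T

/-- `[T]`, the set of infinite paths through `T`. -/
def paths (T : Set BinStr) : Set (ℕ → Bool) := {X | ∀ σ, IsInitSeg σ X → σ ∈ T}

/-- A computable set of binary strings. -/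
def ComputableStrSet (T : Set BinStr) : Prop :=
  ∃ f : BinStr → Bool, Computable f ∧ ∀ σ, σ ∈ T ↔ f σ = true

/-- The fair-coin (uniform) product measure on Cantor space `ℕ → Bool`, realized as
the pushforward of Lebesgue measure on `[0,1)` under the binary-digit map. -/
noncomputable def fairCoin : Measure (ℕ → Bool) :=
  Measure.map (fun x : ℝ => fun n : ℕ => decide (⌊x * 2 ^ (n + 1)⌋ % 2 = 1))
    (volume.restrict (Set.Ico (0 : ℝ) 1))

/-- The basic clopen set `[σ]` of all `X ∈ 2^ℕ` extending `σ`. -/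
def cyl (σ : BinStr) : Set (ℕ → Bool) := {X | IsInitSeg σ X}

/-- A computably enumerable set of pairs `(n, σ)`. -/
def CEStrSet (W : Set (ℕ × BinStr)) : Prop :=
  ∃ f : ℕ × BinStr →. Unit, Partrec f ∧ ∀ p, p ∈ W ↔ (f p).Dom

/-- `X` is Martin-Löf random: it passes every Martin-Löf test. -/
def MLRandom (X : ℕ → Bool) : Prop :=
  ∀ W : Set (ℕ × BinStr), CEStrSet W →
    (∀ n : ℕ, fairCoin (⋃ σ ∈ {σ | (n, σ) ∈ W}, cyl σ) ≤ 1 / 2 ^ n) →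
    X ∉ ⋂ n : ℕ, ⋃ σ ∈ {σ | (n, σ) ∈ W}, cyl σ

/-- A uniformly computable enumeration of binary trees containing every computable
binary tree. -/
def TreeEnum (T : ℕ → Set BinStr) : Prop :=
  (∃ f : ℕ → BinStr → Bool, Computable₂ f ∧ ∀ e σ, σ ∈ T e ↔ f e σ = true) ∧
  (∀ e, IsTree (T e)) ∧
  (∀ S, IsTree S → ComputableStrSet S → ∃ e, T e = S)

/-- The set `D_{e,0}` of strings forcing `dom Φ(G)` to be bounded. -/
def D0 (F : TuringFunctional) : Set BinStr :=
  {τ | ∃ x : ℕ, ∀ ρ, τ <+: ρ → (F.domStr ρ).encard < (x : ℕ∞)}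

/-- The set `D_{e,1,n}` of strings forcing `dom Φ(G)` to be split by `R n`. -/
def D1 (R : ℕ → Set ℕ) (F : TuringFunctional) (n : ℕ) : Set BinStr :=
  {τ | ∀ ρ, τ <+: ρ → ∀ x : ℕ, ∃ ζ, ρ <+: ζ ∧ ∃ u v, x < u ∧ x < v ∧
    u ∈ F.domStr ζ ∧ v ∈ F.domStr ζ ∧ (u ∈ R n ↔ v ∉ R n)}

/-!
Every set computable from `X` is `dom Φ(X)` for some functional `Φ`. For fixed `Φ`, the strings
forcing `dom Φ(G)` to be finite (`D0`) or split by some `R n` (`D1`) are dense. Otherwise, above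
some `σ`, every string has extensions adding arbitrarily large elements to the domain, and also
extensions forcing `dom Φ(G) ⊆* R n` or `dom Φ(G) ⊆* (R n)ᶜ`. Since forcing is `Π⁰₁`, the finite
extension argument deciding all `R n` in turn has a computable approximation `h s`; picking at
each stage `s` a larger element of the domain along some extension of `h s` gives a computable
cohesive set, a contradiction. As there are only countably many functionals and countably many
computable sets, comeagerly many `X` are non-computable and compute no cohesive set.
-/

open Filter Nat.Partrec

section REPred

variable {α β : Type*} [Primcodable α] [Primcodable β] {p q : α → Prop}

theorem rePred_comp {r : β → Prop} (hr : REPred r) {f : α → β} (hf : Computable f) :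
    REPred fun a => r (f a) :=
  Partrec.comp hr hf

theorem rePred_and (hp : REPred p) (hq : REPred q) : REPred fun a => p a ∧ q a :=
  have hq' : Partrec₂ fun a (_ : Unit) => Part.assert (q a) fun _ => Part.some () :=
    rePred_comp hq Computable.fst
  (Partrec.bind hp hq').dom_re.of_eq fun a => by simp [Part.assert]

theorem exists_computablePred_stages (hp : REPred p) :
    ∃ E : ℕ → α → Prop, ComputablePred (fun x : ℕ × α => E x.1 x.2) ∧
      (∀ a, Monotone (E · a)) ∧ ∀ a, p a ↔ ∃ k, E k a := by
  obtain ⟨c, hc⟩ := Code.exists_code.1 hp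
  refine ⟨fun k a => (Code.evaln k c (Encodable.encode a)).isSome, ?_, ?_, fun a => ?_⟩
  · have evaln_primrec :
        Primrec fun x : ℕ × α => Code.evaln x.1 c (Encodable.encode x.2) :=
      Code.primrec_evaln.comp <|
        (Primrec.fst.pair (Primrec.const c)).pair (Primrec.encode.comp Primrec.snd)
    exact ComputablePred.computable_iff.2
      ⟨_, (Primrec.option_isSome.comp evaln_primrec).to_comp, rfl⟩
  · intro a k l hkl h
    obtain ⟨y, hy⟩ := Option.isSome_iff_exists.1 h
    exact Option.isSome_iff_exists.2 ⟨y, Code.evaln_mono hkl hy⟩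
  · have dom_iff : (c.eval (Encodable.encode a)).Dom ↔ p a := by simp [hc, Part.assert]
    simp only [← dom_iff, Part.dom_iff_mem, Code.evaln_complete, Option.isSome_iff_exists,
      Option.mem_def]
    exact exists_comm

theorem exists_partrec_selector {r : α × β → Prop} (hr : REPred r) :
    ∃ f : α →. β, Partrec f ∧ (∀ a, ∀ b ∈ f a, r (a, b)) ∧ ∀ a, (f a).Dom ↔ ∃ b, r (a, b) := by
  classical
  obtain ⟨E, hE, -, hrE⟩ := exists_computablePred_stages hr
  let search (a : α) (n : ℕ) : Option β :=
    (Encodable.decode (α := ℕ × β) n).bind fun x => if E x.1 (a, x.2) then some x.2 else none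
  have search_computable : Computable₂ search := by
    refine Computable.option_bind (Computable.decode.comp Computable.snd) ?_
    have index : Computable fun z : (α × ℕ) × ℕ × β => (z.2.1, z.1.1, z.2.2) :=
      (Computable.fst.comp Computable.snd).pair <|
        (Computable.fst.comp Computable.fst).pair (Computable.snd.comp Computable.snd)
    exact (Computable.cond (hE.decide.comp index)
      (Computable.option_some.comp (Computable.snd.comp Computable.snd))
      (Computable.const none)).of_eq fun z => by simp [Bool.cond_decide]
  have search_spec (a : α) (b : β) : (∃ n, b ∈ search a n) ↔ r (a, b) := by
    rw [hrE]
    constructor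
    · rintro ⟨n, hn⟩
      obtain ⟨⟨k, b'⟩, -, hb'⟩ := Option.bind_eq_some_iff.1 hn
      obtain ⟨hk, rfl⟩ : E k (a, b') ∧ b' = b := by simpa using hb'
      exact ⟨k, hk⟩
    · rintro ⟨k, hk⟩
      exact ⟨Encodable.encode (k, b), by simp [search, hk]⟩
  refine ⟨fun a => Nat.rfindOpt (search a), Partrec.rfindOpt search_computable,
    fun a b hb => (search_spec a b).1 (Nat.rfindOpt_spec hb), fun a => ?_⟩
  rw [Nat.rfindOpt_dom, exists_comm]
  exact exists_congr (search_spec a)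

theorem rePred_exists {r : α × β → Prop} (hr : REPred r) : REPred fun a => ∃ b, r (a, b) := by
  obtain ⟨f, hf, -, dom_iff⟩ := exists_partrec_selector hr
  exact hf.dom_re.of_eq dom_iff

theorem exists_computable_selector {r : α × β → Prop} (hr : REPred r)
    (total : ∀ a, ∃ b, r (a, b)) : ∃ f : α → β, Computable f ∧ ∀ a, r (a, f a) := by
  obtain ⟨f, hf, mem_imp, dom_iff⟩ := exists_partrec_selector hr
  have dom (a : α) : (f a).Dom := (dom_iff a).2 (total a)
  exact ⟨fun a => (f a).get (dom a), hf.of_eq_tot fun a => Part.get_mem (dom a),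
    fun a => mem_imp a _ (Part.get_mem (dom a))⟩

/- The guess at stage `s` is the first candidate not refuted by stage `s`; the cut-off `s ≤ c` only
serves to make the search total. -/
theorem exists_computable_limit_selector [Inhabited β] {P : α → β → Prop}
    (hP : REPred fun x : α × β => ¬ P x.1 x.2) :
    ∃ guess : ℕ × α → β, Computable guess ∧
      ∀ a, (∃ b, P a b) → ∃ b, P a b ∧ ∀ᶠ s in atTop, guess (s, a) = b := by
  classical
  obtain ⟨E, hE, E_mono, not_P_iff⟩ := exists_computablePred_stages hP
  let candidate (c : ℕ) : β := (Encodable.decode c).getD default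
  have candidate_computable : Computable candidate :=
    Computable.option_getD Computable.decode (Computable.const default)
  let Accepts (x : ℕ × α) (c : ℕ) : Prop := x.1 ≤ c ∨ ¬ E x.1 (x.2, candidate c)
  have accepts_computable : ComputablePred fun z : (ℕ × α) × ℕ => Accepts z.1 z.2 := by
    have stage : Computable fun z : (ℕ × α) × ℕ => z.1.1 := Computable.fst.comp Computable.fst
    have refuted := hE.decide.comp <| stage.pair <|
      (Computable.snd.comp Computable.fst).pair (candidate_computable.comp Computable.snd)
    exact Computable.computablePred <| (Primrec.or.to_comp.comp
      (Primrec.nat_le.decide.to_comp.comp stage Computable.snd)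
      (Primrec.not.to_comp.comp refuted)).of_eq fun z => by simp [Accepts]
  have accepts_total (x : ℕ × α) : ∃ c, Accepts x c := ⟨x.1, Or.inl le_rfl⟩
  refine ⟨fun x => candidate (Nat.find (accepts_total x)),
    candidate_computable.comp (Computable.find accepts_computable accepts_total), ?_⟩
  rintro a ⟨b, hb⟩
  have ex : ∃ c, P a (candidate c) := ⟨Encodable.encode b, by simpa [candidate] using hb⟩
  refine ⟨candidate (Nat.find ex), Nat.find_spec ex, ?_⟩
  have rejected : ∀ᶠ s in atTop, ∀ c < Nat.find ex, ¬ Accepts (s, a) c := by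
    refine (Set.finite_Iio (Nat.find ex)).eventually_all.2 fun c hc => ?_
    obtain ⟨k, hk⟩ := (not_P_iff (a, candidate c)).1 (Nat.find_min ex hc)
    filter_upwards [eventually_ge_atTop k, eventually_gt_atTop c] with s hks hcs
    simpa [Accepts, hcs] using E_mono _ hks hk
  filter_upwards [rejected] with s hs
  congr 1
  have accepted : Accepts (s, a) (Nat.find ex) :=
    Or.inr fun h => (not_P_iff (a, candidate _)).2 ⟨s, h⟩ (Nat.find_spec ex)
  exact (Nat.find_eq_iff _).2 ⟨accepted, hs⟩

end REPred

section ComputableSets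

theorem ComputableSeq.computablePred {R : ℕ → Set ℕ} (hR : ComputableSeq R) :
    ComputablePred fun p : ℕ × ℕ => p.2 ∈ R p.1 := by
  obtain ⟨f, hf, hfR⟩ := hR
  exact ComputablePred.computable_iff.2 ⟨_, hf, funext fun p => propext (hfR p.1 p.2)⟩

theorem computableSet_range_of_strictMono {e : ℕ → ℕ} (he : Computable e) (hm : StrictMono e) :
    ComputableSet (Set.range e) := by
  have ex (x : ℕ) : ∃ k, x ≤ e k := ⟨x, hm.le_apply⟩
  let index (x : ℕ) : ℕ := Nat.find (ex x)
  have index_computable : Computable index :=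
    Computable.find (P := fun x k => x ≤ e k) (Computable.computablePred <|
      Primrec.nat_le.decide.to_comp.comp Computable.fst (he.comp Computable.snd)) ex
  refine ⟨fun x => decide (e (index x) = x),
    Primrec.eq.decide.to_comp.comp (he.comp index_computable) Computable.id, fun x => ?_⟩
  rw [decide_eq_true_iff]
  refine ⟨?_, fun h => ⟨_, h⟩⟩
  rintro ⟨k, rfl⟩
  exact le_antisymm (hm.monotone (Nat.find_min' _ le_rfl)) (Nat.find_spec (ex (e k)))

theorem exists_computable_strictMono_mem {V : ℕ → Set ℕ}
    (hV : REPred fun p : ℕ × ℕ => p.2 ∈ V p.1) (unbounded : ∀ s m, ∃ u ∈ V s, m < u) :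
    ∃ e : ℕ → ℕ, Computable e ∧ StrictMono e ∧ ∀ s, e s ∈ V s := by
  obtain ⟨next, next_computable, next_spec⟩ :=
    exists_computable_selector (r := fun x : (ℕ × ℕ) × ℕ => x.2 ∈ V x.1.1 ∧ x.1.2 < x.2)
      (rePred_and
        (rePred_comp hV ((Computable.fst.comp Computable.fst).pair Computable.snd))
        (PrimrecPred.computablePred <|
          Primrec.nat_lt.comp (Primrec.snd.comp Primrec.fst) Primrec.snd).to_re)
      fun x => unbounded x.1 x.2
  let e (s : ℕ) : ℕ := Nat.rec (next (0, 0)) (fun s m => next (s + 1, m)) s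
  refine ⟨e, ?_, strictMono_nat_of_lt_succ fun s => (next_spec (s + 1, e s)).2, fun s => ?_⟩
  · have step : Computable₂ fun (_ : ℕ) (p : ℕ × ℕ) => next (p.1 + 1, p.2) :=
      next_computable.comp <| (Computable.succ.comp (Computable.fst.comp Computable.snd)).pair
        (Computable.snd.comp Computable.snd)
    exact Computable.nat_rec Computable.id (Computable.const _) step
  · cases s with
    | zero => exact (next_spec (0, 0)).1
    | succ s => exact (next_spec (s + 1, e s)).1

theorem countable_setOf_computableSet :
    {X : ℕ → Bool | ComputableSet {n | X n = true}}.Countable := by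
  have countable_computable : {f : ℕ → ℕ | Computable f}.Countable :=
    Set.countable_coe_iff.1 (inferInstanceAs (Countable {f : ℕ → ℕ // Computable f}))
  have encode_injective : Function.Injective fun (X : ℕ → Bool) n => Encodable.encode (X n) :=
    Encodable.encode_injective.comp_left
  refine (Set.Countable.preimage countable_computable encode_injective).mono ?_
  rintro X ⟨f, hf, hfX⟩
  obtain rfl : X = f := funext fun n => Bool.eq_iff_iff.2 (hfX n)
  exact Computable.encode.comp hf

end ComputableSets

/- A finite extension argument in which each requirement `P n` is `Π⁰₁`: the true construction is
only computable in the halting problem, and `h s` is its `s`-th approximation, run for `s` steps. -/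
theorem exists_computable_eventually_isPrefix {α : Type*} [Primcodable α] {P : ℕ → List α → Prop}
    (hP : REPred fun x : ℕ × List α => ¬ P x.1 x.2) {σ : List α}
    (dense : ∀ n τ, σ <+: τ → ∃ ρ, τ <+: ρ ∧ P n ρ) :
    ∃ h : ℕ → List α, Computable h ∧ (∀ s, σ <+: h s) ∧
      ∀ n, ∃ ρ, P n ρ ∧ ∀ᶠ s in atTop, ρ <+: h s := by
  have append_computable :
      Computable fun x : (ℕ × List α) × List α => (x.1.1, x.1.2 ++ x.2) :=
    (Computable.fst.comp Computable.fst).pair <|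
      Computable.list_append.comp (Computable.snd.comp Computable.fst) Computable.snd
  obtain ⟨guess, guess_computable, guess_lim⟩ :=
    exists_computable_limit_selector (P := fun (x : ℕ × List α) γ => P x.1 (x.2 ++ γ))
      (rePred_comp hP append_computable)
  let g (s n : ℕ) : List α := Nat.rec σ (fun n τ => τ ++ guess (s, n, τ)) n
  have g_computable : Computable₂ g := by
    have step : Computable₂ fun (x : ℕ × ℕ) (y : ℕ × List α) => y.2 ++ guess (x.1, y) :=
      Computable.list_append.comp (Computable.snd.comp Computable.snd) <|
        guess_computable.comp ((Computable.fst.comp Computable.fst).pair Computable.snd)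
    exact Computable.nat_rec (f := Prod.snd) (g := fun _ : ℕ × ℕ => σ) Computable.snd
      (Computable.const σ) step
  have g_mono (s : ℕ) {m n : ℕ} (hmn : m ≤ n) : g s m <+: g s n := by
    induction hmn with
    | refl => exact List.prefix_rfl
    | step _ ih => exact ih.trans (List.prefix_append _ _)
  have succ_lim {n τ} (hτ : ∀ᶠ s in atTop, g s n = τ) :
      ∃ ρ, P n ρ ∧ ∀ᶠ s in atTop, g s (n + 1) = ρ := by
    obtain ⟨s, hs⟩ := hτ.exists
    obtain ⟨_, ⟨γ, rfl⟩, hγ⟩ := dense n τ (hs ▸ g_mono s n.zero_le)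
    obtain ⟨δ, hδ, guess_eq⟩ := guess_lim (n, τ) ⟨γ, hγ⟩
    refine ⟨τ ++ δ, hδ, ?_⟩
    filter_upwards [hτ, guess_eq] with s hs₁ hs₂
    simp only [g] at hs₁ ⊢
    rw [hs₁, hs₂]
  have lim (n : ℕ) : ∃ τ, ∀ᶠ s in atTop, g s n = τ := by
    induction n with
    | zero => exact ⟨σ, Eventually.of_forall fun _ => rfl⟩
    | succ n ih =>
      obtain ⟨τ, hτ⟩ := ih
      exact (succ_lim hτ).imp fun _ => And.right
  refine ⟨fun s => g s s, g_computable.comp Computable.id Computable.id,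
    fun s => g_mono s s.zero_le, fun n => ?_⟩
  obtain ⟨τ, hτ⟩ := lim n
  obtain ⟨ρ, hρ, g_eq⟩ := succ_lim hτ
  refine ⟨ρ, hρ, ?_⟩
  filter_upwards [g_eq, eventually_ge_atTop (n + 1)] with s hs hns
  exact hs ▸ g_mono s hns

section Cohesive

variable {R : ℕ → Set ℕ} {C : Set ℕ}

theorem subsetStar_range_of_eventually_mem {e : ℕ → ℕ} {A : Set ℕ}
    (h : ∀ᶠ s in atTop, e s ∈ A) : SubsetStar (Set.range e) A := by
  rw [← Nat.cofinite_eq_atTop, eventually_cofinite] at h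
  refine (h.image e).subset ?_
  rintro _ ⟨⟨s, rfl⟩, hs⟩
  exact ⟨s, hs, rfl⟩

theorem not_cohesive_of_forall_exists_split {n : ℕ}
    (h : ∀ x, ∃ u v, x < u ∧ x < v ∧ u ∈ C ∧ v ∈ C ∧ (u ∈ R n ↔ v ∉ R n)) :
    ¬ Cohesive R C := by
  rintro ⟨-, hC⟩
  rcases hC n with hn | hn <;>
  · obtain ⟨x, hx⟩ := hn.bddAbove
    obtain ⟨u, v, hu, hv, huC, hvC, huv⟩ := h x
    have mem_of_lt {w} (hw : x < w) (hwC : w ∈ C) := not_not.1 fun h => hw.not_ge (hx ⟨hwC, h⟩)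
    have huR := mem_of_lt hu huC
    have hvR := mem_of_lt hv hvC
    grind

end Cohesive

section InitialSegments

variable {σ τ : BinStr} {X : ℕ → Bool}

/-- The initial segment `X ↾ n` of length `n`. -/
def initSeg (X : ℕ → Bool) (n : ℕ) : BinStr := (List.range n).map X

theorem initSeg_prefix_initSeg (X : ℕ → Bool) {m n : ℕ} (hmn : m ≤ n) :
    initSeg X m <+: initSeg X n := by
  rw [List.prefix_iff_eq_take]
  simp [initSeg, ← List.map_take, List.take_range, hmn]

theorem isInitSeg_iff_exists_eq_initSeg : IsInitSeg σ X ↔ ∃ n, σ = initSeg X n := by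
  constructor
  · intro h
    refine ⟨σ.length, List.ext_getElem (by simp [initSeg]) fun i hi _ => ?_⟩
    simpa [initSeg, hi] using h i hi
  · rintro ⟨n, rfl⟩ i hi
    rw [List.getD_eq_getElem _ _ hi]
    simp [initSeg]

theorem isInitSeg_initSeg (X : ℕ → Bool) (n : ℕ) : IsInitSeg (initSeg X n) X :=
  isInitSeg_iff_exists_eq_initSeg.2 ⟨n, rfl⟩

theorem IsInitSeg.of_isPrefix (hτ : IsInitSeg τ X) (h : σ <+: τ) : IsInitSeg σ X := by
  intro i hi
  rw [← hτ i (hi.trans_le h.length_le), List.getD_eq_getElem _ _ hi,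
    List.getD_eq_getElem _ _ (hi.trans_le h.length_le), h.getElem]

theorem IsInitSeg.exists_common_extension (hσ : IsInitSeg σ X) (hτ : IsInitSeg τ X) :
    ∃ μ, IsInitSeg μ X ∧ σ <+: μ ∧ τ <+: μ := by
  obtain ⟨m, rfl⟩ := isInitSeg_iff_exists_eq_initSeg.1 hσ
  obtain ⟨n, rfl⟩ := isInitSeg_iff_exists_eq_initSeg.1 hτ
  exact ⟨_, isInitSeg_initSeg X (max m n), initSeg_prefix_initSeg X (le_max_left m n),
    initSeg_prefix_initSeg X (le_max_right m n)⟩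

end InitialSegments

section Genericity

theorem isOpen_cyl (σ : BinStr) : IsOpen (cyl σ) := by
  have : cyl σ = PiNat.cylinder (fun i => σ.getD i false) σ.length := by
    ext X
    exact forall₂_congr fun _ _ => eq_comm
  exact this ▸ PiNat.isOpen_cylinder _ _ _

theorem eventually_residual_exists_isInitSeg_mem {D : Set BinStr}
    (dense : ∀ σ, ∃ τ, σ <+: τ ∧ τ ∈ D) :
    ∀ᶠ X in residual (ℕ → Bool), ∃ σ ∈ D, IsInitSeg σ X := by
  have eq_iUnion : {X : ℕ → Bool | ∃ σ ∈ D, IsInitSeg σ X} = ⋃ σ ∈ D, cyl σ := by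
    ext X
    simp [cyl]
  refine residual_of_dense_open (eq_iUnion ▸ isOpen_biUnion fun σ _ => isOpen_cyl σ) ?_
  refine (PiNat.isTopologicalBasis_cylinders fun _ => Bool).dense_iff.2 ?_
  rintro _ ⟨X, n, rfl⟩ -
  obtain ⟨τ, hτ, hτD⟩ := dense (initSeg X n)
  have hτY : IsInitSeg τ fun i => τ.getD i false := fun _ _ => rfl
  refine ⟨_, fun i hi => ?_, τ, hτD, hτY⟩
  have hi' : i < (initSeg X n).length := by simpa [initSeg] using hi
  exact (hτY.of_isPrefix hτ i hi').symm.trans (isInitSeg_initSeg X n i hi')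

theorem eventually_residual_meets_or_avoids (S : Set BinStr) :
    ∀ᶠ X in residual (ℕ → Bool),
      (∃ σ, IsInitSeg σ X ∧ σ ∈ S) ∨ ∃ σ, IsInitSeg σ X ∧ ∀ τ, σ <+: τ → τ ∉ S := by
  have dense (σ : BinStr) : ∃ τ, σ <+: τ ∧ τ ∈ S ∪ {τ | ∀ ρ, τ <+: ρ → ρ ∉ S} := by
    by_cases h : ∃ τ, σ <+: τ ∧ τ ∈ S
    · exact h.imp fun τ hτ => ⟨hτ.1, Or.inl hτ.2⟩
    · push Not at h
      exact ⟨σ, List.prefix_rfl, Or.inr h⟩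
  filter_upwards [eventually_residual_exists_isInitSeg_mem dense]
  rintro X ⟨σ, hσ | hσ, hσX⟩
  exacts [Or.inl ⟨σ, hσX, hσ⟩, Or.inr ⟨σ, hσX, hσ⟩]

theorem eventually_residual_ne (Y : ℕ → Bool) : ∀ᶠ X in residual (ℕ → Bool), X ≠ Y := by
  have dense (σ : BinStr) : ∃ τ, σ <+: τ ∧ τ ∈ {τ | ¬ IsInitSeg τ Y} := by
    refine ⟨σ ++ [!Y σ.length], List.prefix_append _ _, fun h => ?_⟩
    simpa using h σ.length (by simp)
  filter_upwards [eventually_residual_exists_isInitSeg_mem dense]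
  rintro X ⟨σ, hσY, hσX⟩ rfl
  exact hσY hσX

theorem eventually_residual_not_computableSet :
    ∀ᶠ X in residual (ℕ → Bool), ¬ ComputableSet {n | X n = true} := by
  filter_upwards [(eventually_countable_ball countable_setOf_computableSet).2
    fun Y _ => eventually_residual_ne Y] with X hX hXc
  exact hX X hXc rfl

end Genericity

namespace TuringFunctional

variable {R : ℕ → Set ℕ} {F : TuringFunctional}

theorem domStr_mono (F : TuringFunctional) {σ τ : BinStr} (h : σ <+: τ) :
    F.domStr σ ⊆ F.domStr τ :=
  fun x => F.mono h x

theorem domStr_subset_domF {σ : BinStr} {X : ℕ → Bool} (h : IsInitSeg σ X) :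
    F.domStr σ ⊆ F.domF X :=
  fun _ hx => ⟨σ, h, hx⟩

theorem rePred_mem_domStr (F : TuringFunctional) :
    REPred fun p : BinStr × ℕ => p.2 ∈ F.domStr p.1 :=
  F.partrec.dom_re

instance : Countable TuringFunctional := by
  have partrec_decode (F : TuringFunctional) :
      Partrec fun n => (Part.ofOption (Encodable.decode n)).bind F.Φ :=
    Computable.decode.ofOption.bind (F.partrec.comp Computable.snd)
  let code (F : TuringFunctional) : {f : ℕ →. ℕ // Partrec f} := ⟨_, partrec_decode F⟩
  refine Function.Injective.countable (f := code) fun F G hFG => ?_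
  have hΦ : F.Φ = G.Φ := funext fun a => by
    have h : (Part.some a).bind F.Φ = (Part.some a).bind G.Φ := by
      simpa [code] using congrFun (congrArg Subtype.val hFG) (Encodable.encode a)
    exact (Part.bind_some a F.Φ).symm.trans (h.trans (Part.bind_some a G.Φ))
  cases F
  cases G
  congr

theorem exists_domF_eq_of_reducibleToFun {C : Set ℕ} {X : ℕ → Bool} (h : ReducibleToFun C X) :
    ∃ F : TuringFunctional, F.domF X = C := by
  obtain ⟨Ψ, hΨ, mono, total, value⟩ := h
  let Φ (a : BinStr × ℕ) : Part ℕ := (Ψ a).bind fun b => bif b then Part.some 0 else Part.none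
  have Φ_dom (a : BinStr × ℕ) : (Φ a).Dom ↔ true ∈ Ψ a := by
    simp [Φ, Part.dom_iff_mem]
  have Φ_partrec : Partrec Φ :=
    hΨ.bind (Partrec.cond Computable.snd (Computable.const 0).partrec Partrec.none)
  refine ⟨⟨Φ, Φ_partrec, fun σ τ hστ x => ?_⟩, Set.ext fun x => ⟨?_, fun hx => ?_⟩⟩
  · rw [Φ_dom, Φ_dom]
    exact mono hστ x true
  · rintro ⟨σ, hσ, hx⟩
    exact (value σ x true hσ ((Φ_dom _).1 hx)).1 rfl
  · obtain ⟨σ, hσ, hdom⟩ := total x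
    have hb := Part.get_mem hdom
    exact ⟨σ, hσ, (Φ_dom _).2 ((value σ x _ hσ hb).2 hx ▸ hb)⟩

theorem exists_lt_mem_domStr_of_notMem_D0 {τ : BinStr} (hτ : τ ∉ D0 F) (k : ℕ) :
    ∃ ρ, τ <+: ρ ∧ ∃ u ∈ F.domStr ρ, k < u := by
  by_contra! bounded
  refine hτ ⟨k + 2, fun ρ hρ => ?_⟩
  calc (F.domStr ρ).encard ≤ (Set.Iic k).encard := Set.encard_le_encard (bounded ρ hρ)
    _ = (k + 1 : ℕ) := by simp [Set.encard_eq_coe_toFinset_card]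
    _ < (k + 2 : ℕ) := by exact_mod_cast Nat.lt_succ_self _

theorem finite_domF_of_isInitSeg_mem_D0 {σ : BinStr} {X : ℕ → Bool} (hσX : IsInitSeg σ X)
    (hσ : σ ∈ D0 F) : (F.domF X).Finite := by
  obtain ⟨k, hk⟩ := hσ
  by_contra infinite
  obtain ⟨t, ht, rfl⟩ := Set.Infinite.exists_subset_card_eq infinite k
  have domF_subset : F.domF X ⊆ ⋃ n, F.domStr (initSeg X n) := by
    rintro x ⟨τ, hτ, hx⟩
    obtain ⟨n, rfl⟩ := isInitSeg_iff_exists_eq_initSeg.1 hτ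
    exact Set.mem_iUnion.2 ⟨n, hx⟩
  have directed : Directed (· ⊆ ·) fun n => F.domStr (initSeg X n) :=
    Monotone.directed_le fun _ _ hmn => F.domStr_mono (initSeg_prefix_initSeg X hmn)
  obtain ⟨n, hn⟩ := directed.exists_mem_subset_of_finset_subset_biUnion (ht.trans domF_subset)
  obtain ⟨μ, -, hσμ, hnμ⟩ := hσX.exists_common_extension (isInitSeg_initSeg X n)
  refine (hk μ hσμ).not_ge ?_
  rw [← Set.encard_coe_eq_coe_finsetCard]
  exact Set.encard_le_encard (hn.trans (F.domStr_mono hnμ))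

/-- `ρ` forces `dom Φ(G) ⊆* A`, in the sense that no extension of `ρ` puts an element outside `A`
into the domain. The finitely many exceptions are taken below the length of `ρ`, which makes this
a `Π⁰₁` condition on `ρ` when `A` is computable. -/
def ForcesSubset (F : TuringFunctional) (A : Set ℕ) (ρ : BinStr) : Prop :=
  ∀ ζ, ρ <+: ζ → ∀ u ∈ F.domStr ζ, ρ.length < u → u ∈ A

/-- `ρ` forces `dom Φ(G)` to be almost contained in `A` or in its complement. -/
def Decides (F : TuringFunctional) (A : Set ℕ) (ρ : BinStr) : Prop :=
  F.ForcesSubset A ρ ∨ F.ForcesSubset Aᶜ ρ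

theorem rePred_not_forcesSubset (F : TuringFunctional) {A : ℕ → Set ℕ}
    (hA : ComputablePred fun p : ℕ × ℕ => p.2 ∈ A p.1) :
    REPred fun q : ℕ × BinStr => ¬ F.ForcesSubset (A q.1) q.2 := by
  have string : Computable fun z : (ℕ × BinStr) × BinStr × ℕ => z.1.2 ++ z.2.1 :=
    Computable.list_append.comp (Computable.snd.comp Computable.fst)
      (Computable.fst.comp Computable.snd)
  have element : Computable fun z : (ℕ × BinStr) × BinStr × ℕ => z.2.2 :=
    Computable.snd.comp Computable.snd
  have enumerated : REPred fun z : (ℕ × BinStr) × BinStr × ℕ =>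
      z.2.2 ∈ F.domStr (z.1.2 ++ z.2.1) :=
    rePred_comp (f := fun z : (ℕ × BinStr) × BinStr × ℕ => (z.1.2 ++ z.2.1, z.2.2))
      F.rePred_mem_domStr (string.pair element)
  have large : REPred fun z : (ℕ × BinStr) × BinStr × ℕ => z.1.2.length < z.2.2 :=
    (Computable.computablePred <| Primrec.nat_lt.decide.to_comp.comp
      (Computable.list_length.comp (Computable.snd.comp Computable.fst)) element).to_re
  have outside : REPred fun z : (ℕ × BinStr) × BinStr × ℕ => z.2.2 ∉ A z.1.1 :=
    rePred_comp hA.not.to_re ((Computable.fst.comp Computable.fst).pair element)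
  have counterexample := rePred_and enumerated (rePred_and large outside)
  refine (rePred_exists counterexample).of_eq ?_
  rintro ⟨n, ρ⟩
  simp [ForcesSubset, List.IsPrefix]

theorem rePred_not_decides (F : TuringFunctional) (hR : ComputableSeq R) :
    REPred fun q : ℕ × BinStr => ¬ F.Decides (R q.1) q.2 :=
  (rePred_and (F.rePred_not_forcesSubset hR.computablePred)
    (F.rePred_not_forcesSubset (A := fun n => (R n)ᶜ) hR.computablePred.not)).of_eq
    fun _ => not_or.symm

theorem exists_decides_of_notMem_D1 {n : ℕ} {τ : BinStr} (hD1 : τ ∉ D1 R F n)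
    (hD0 : ∀ ρ, τ <+: ρ → ρ ∉ D0 F) : ∃ ρ, τ <+: ρ ∧ F.Decides (R n) ρ := by
  obtain ⟨ρ, hτρ, x, homogeneous⟩ : ∃ ρ, τ <+: ρ ∧ ∃ x, ∀ ζ, ρ <+: ζ →
      ∀ u v, x < u → x < v → u ∈ F.domStr ζ → v ∈ F.domStr ζ → (u ∈ R n ↔ v ∈ R n) := by
    simp only [D1, Set.mem_ofPred_eq] at hD1
    push Not at hD1
    obtain ⟨ρ, hτρ, x, h⟩ := hD1
    refine ⟨ρ, hτρ, x, fun ζ hζ u v hu hv huζ hvζ => ?_⟩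
    have := h ζ hζ u v hu hv huζ hvζ
    tauto
  have hρ : ρ <+: ρ ++ List.replicate x false := List.prefix_append _ _
  obtain ⟨μ, hμ, u, huμ, hu⟩ := exists_lt_mem_domStr_of_notMem_D0 (hD0 _ (hτρ.trans hρ)) x
  have hxμ : x ≤ μ.length := le_trans (by simp) hμ.length_le
  have same_side {ζ v} (hζ : μ <+: ζ) (hv : v ∈ F.domStr ζ) (hμv : μ.length < v) :
      u ∈ R n ↔ v ∈ R n :=
    homogeneous ζ ((hρ.trans hμ).trans hζ) u v hu (hxμ.trans_lt hμv) (F.domStr_mono hζ huμ) hv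
  refine ⟨μ, (hτρ.trans hρ).trans hμ, ?_⟩
  by_cases hun : u ∈ R n
  · exact Or.inl fun ζ hζ v hv hμv => (same_side hζ hv hμv).1 hun
  · exact Or.inr fun ζ hζ v hv hμv => mt (same_side hζ hv hμv).2 hun

theorem exists_computableSet_cohesive (hR : ComputableSeq R) {σ : BinStr}
    (unbounded : ∀ τ, σ <+: τ → ∀ k, ∃ ρ, τ <+: ρ ∧ ∃ u ∈ F.domStr ρ, k < u)
    (decided : ∀ n τ, σ <+: τ → ∃ ρ, τ <+: ρ ∧ F.Decides (R n) ρ) :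
    ∃ C : Set ℕ, ComputableSet C ∧ Cohesive R C := by
  obtain ⟨h, h_computable, hσh, h_lim⟩ :=
    exists_computable_eventually_isPrefix (F.rePred_not_decides hR) decided
  let V (s : ℕ) : Set ℕ := {u | ∃ β, u ∈ F.domStr (h s ++ β)}
  have V_re : REPred fun p : ℕ × ℕ => p.2 ∈ V p.1 :=
    rePred_exists <| rePred_comp F.rePred_mem_domStr <|
      (Computable.list_append.comp
        (h_computable.comp (Computable.fst.comp Computable.fst)) Computable.snd).pair
        (Computable.snd.comp Computable.fst)
  have V_unbounded (s m : ℕ) : ∃ u ∈ V s, m < u := by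
    obtain ⟨_, ⟨β, rfl⟩, u, hu, hmu⟩ := unbounded (h s) (hσh s) m
    exact ⟨u, ⟨β, hu⟩, hmu⟩
  obtain ⟨e, e_computable, e_mono, e_mem⟩ := exists_computable_strictMono_mem V_re V_unbounded
  refine ⟨Set.range e, computableSet_range_of_strictMono e_computable e_mono,
    Set.infinite_range_of_injective e_mono.injective, fun n => ?_⟩
  obtain ⟨ρ, decides, hρ⟩ := h_lim n
  have subsetStar {A : Set ℕ} (forces : F.ForcesSubset A ρ) : SubsetStar (Set.range e) A := by
    refine subsetStar_range_of_eventually_mem ?_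
    filter_upwards [hρ, eventually_gt_atTop ρ.length] with s hs hρs
    obtain ⟨β, hβ⟩ := e_mem s
    exact forces _ (hs.trans (List.prefix_append _ _)) _ hβ (hρs.trans_le e_mono.le_apply)
  exact decides.imp subsetStar subsetStar

theorem exists_prefix_mem_D0_or_mem_D1 (F : TuringFunctional) (hR : ComputableSeq R)
    (hno : ¬ ∃ C : Set ℕ, ComputableSet C ∧ Cohesive R C) (σ : BinStr) :
    ∃ τ, σ <+: τ ∧ (τ ∈ D0 F ∨ ∃ n, τ ∈ D1 R F n) := by
  by_contra! h
  exact hno <| exists_computableSet_cohesive hR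
    (fun τ hτ => exists_lt_mem_domStr_of_notMem_D0 (h τ hτ).1)
    fun n τ hτ => exists_decides_of_notMem_D1 ((h τ hτ).2 n) fun ρ hρ => (h ρ (hτ.trans hρ)).1

/-- The strings `ζ` for which `dom Φ(ζ)` has elements above `x` on both sides of `A`. -/
def splittingStrings (F : TuringFunctional) (A : Set ℕ) (x : ℕ) : Set BinStr :=
  {ζ | ∃ u v, x < u ∧ x < v ∧ u ∈ F.domStr ζ ∧ v ∈ F.domStr ζ ∧ (u ∈ A ↔ v ∉ A)}

theorem eventually_residual_not_cohesive_of_mem_D1 (R : ℕ → Set ℕ) (F : TuringFunctional) :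
    ∀ᶠ X in residual (ℕ → Bool), ∀ σ n, IsInitSeg σ X → σ ∈ D1 R F n →
      ¬ Cohesive R (F.domF X) := by
  filter_upwards [eventually_countable_forall.2 fun n => eventually_countable_forall.2 fun x =>
    eventually_residual_meets_or_avoids (F.splittingStrings (R n) x)] with X hX σ n hσX hσ
  refine not_cohesive_of_forall_exists_split (n := n) fun x => ?_
  rcases hX n x with ⟨ζ, hζX, u, v, hu, hv, huζ, hvζ, huv⟩ | ⟨ρ, hρX, avoids⟩
  · exact ⟨u, v, hu, hv, domStr_subset_domF hζX huζ, domStr_subset_domF hζX hvζ, huv⟩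
  · obtain ⟨μ, -, hσμ, hρμ⟩ := hσX.exists_common_extension hρX
    obtain ⟨ζ, hμζ, splits⟩ := hσ μ hσμ x
    exact (avoids ζ (hρμ.trans hμζ) splits).elim

theorem eventually_residual_not_cohesive_domF (F : TuringFunctional) (hR : ComputableSeq R)
    (hno : ¬ ∃ C : Set ℕ, ComputableSet C ∧ Cohesive R C) :
    ∀ᶠ X in residual (ℕ → Bool), ¬ Cohesive R (F.domF X) := by
  have dense := F.exists_prefix_mem_D0_or_mem_D1 hR hno
  filter_upwards [eventually_residual_exists_isInitSeg_mem dense,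
    eventually_residual_not_cohesive_of_mem_D1 R F]
  rintro X ⟨σ, hD0 | ⟨n, hD1⟩, hσX⟩ split
  · exact fun hC => hC.1 (finite_domF_of_isInitSeg_mem_D0 hσX hD0)
  · exact split σ n hσX hD1

end TuringFunctional

theorem exists_noncomputable_computing_no_cohesive_general
    (R : ℕ → Set ℕ) (hR : ComputableSeq R)
    (hno : ¬ ∃ C : Set ℕ, ComputableSet C ∧ Cohesive R C) :
    ∀ᶠ X in residual (ℕ → Bool), ¬ ComputableSet {n | X n = true} ∧
      ∀ C : Set ℕ, ReducibleToFun C X → ¬ Cohesive R C := by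
  filter_upwards [eventually_residual_not_computableSet, eventually_countable_forall.2
    fun F : TuringFunctional => F.eventually_residual_not_cohesive_domF hR hno]
    with X not_computable not_cohesive
  refine ⟨not_computable, fun C hC => ?_⟩
  obtain ⟨F, rfl⟩ := TuringFunctional.exists_domF_eq_of_reducibleToFun hC
  exact not_cohesive F

/-- **Answer to Cai's question.** If `R` is a computable sequence admitting no
computable `R`-cohesive set, then there exists a non-computable `X` computing
no `R`-cohesive set. -/
theorem exists_noncomputable_computing_no_cohesive
    (R : ℕ → Set ℕ) (hR : ComputableSeq R)
    (hno : ¬ ∃ C : Set ℕ, ComputableSet C ∧ Cohesive R C) :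
    ∃ X : ℕ → Bool, ¬ ComputableSet {n | X n = true} ∧
      ∀ C : Set ℕ, ReducibleToFun C X → ¬ Cohesive R C := by
  exact (dense_of_mem_residual
    (exists_noncomputable_computing_no_cohesive_general R hR hno)).nonempty
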